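/- arXiv:2209.02657 — 2 statements merged into one kernel-verified Lean document; each statement's English description precedes it below -/
import Mathlib

section
/- Let n ≥ 1 and let Σ be a nonempty family of hyperplanes of PG(2n+1,q) satisfying property (P1^+). Then every hyperplane of PG(2n+1,q) not belonging to Σ contains exactly (q^{2n}+q^{n+1}−q^n−1)/(q−1) black points. -/
open Finset Module in
theorem aux_inter {F V : Type} [Field F] [AddCommGroup V] [Module F V] [FiniteDimensional F V]
    (m : ℕ) (hV : finrank F V = m + 2) (A B : Submodule F V)
    (hA : finrank F A = m + 1) (hB : finrank F B = m + 1) (h : A ≠ B) :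
    finrank F (A ⊓ B : Submodule F V) = m := by
  have h1 := Submodule.finrank_sup_add_finrank_inf_eq A B
  have h2 : finrank F (A ⊔ B : Submodule F V) ≤ m + 2 := hV ▸ Submodule.finrank_le _
  have h3 : A < A ⊔ B := by
    refine lt_of_le_of_ne le_sup_left fun h4 => h ?_
    have h5 : B ≤ A := by rw [h4]; exact le_sup_right
    exact (Submodule.eq_of_le_of_finrank_eq h5 (by omega)).symm
  have h6 := Submodule.finrank_lt_finrank_of_lt h3
  omega

open Finset Module Classical in
theorem aux_card {F V : Type} [Field F] [Fintype F] [AddCommGroup V] [Module F V] [Fintype V]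
    (A : Submodule F V) : (univ.filter (fun v : V => v ∈ A)).card =
      Fintype.card F ^ finrank F A := by
  rw [← Module.card_eq_pow_finrank (K := F) (V := A), Fintype.card_subtype]

open Finset Module Classical in
theorem aux_points {F V : Type} [Field F] [Fintype F] [AddCommGroup V] [Module F V] [Fintype V]
    (P : Submodule F V → Prop) :
    (univ.filter (fun v : V => v ≠ 0 ∧ P (Submodule.span F {v}))).card =
      {p : Submodule F V | finrank F p = 1 ∧ P p}.ncard * (Fintype.card F - 1) := by
  have hf : {p : Submodule F V | finrank F p = 1 ∧ P p}.Finite := Set.toFinite _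
  rw [Set.ncard_eq_toFinset_card _ hf]
  rw [Finset.card_eq_sum_card_fiberwise (f := fun v => Submodule.span F {v}) (t := hf.toFinset)]
  · rw [Finset.sum_const_nat]
    intro p hp
    simp only [Set.Finite.mem_toFinset, Set.mem_setOf_eq] at hp
    have h1 := aux_card p
    rw [hp.1, pow_one] at h1
    rw [← h1, ← Finset.card_erase_of_mem (a := (0 : V)) (by simp)]
    congr 1
    ext v
    simp only [mem_filter, mem_univ, true_and, mem_erase]
    constructor
    · rintro ⟨⟨h2, _⟩, h3⟩
      exact ⟨h2, h3 ▸ Submodule.mem_span_singleton_self v⟩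
    · rintro ⟨h2, h3⟩
      have h4 : Submodule.span F {v} = p := by
        apply Submodule.eq_of_le_of_finrank_eq
        · simpa using h3
        · rw [hp.1, finrank_span_singleton h2]
      exact ⟨⟨h2, h4 ▸ hp.2⟩, h4⟩
  · intro v hv
    simp only [coe_filter, mem_univ, true_and, Set.mem_setOf_eq] at hv
    simp only [Set.Finite.coe_toFinset, Set.mem_setOf_eq]
    exact ⟨finrank_span_singleton hv.1, hv.2⟩

theorem aux_arith (q Q s : ℤ) (hq : 2 ≤ q) (hQ : q ≤ Q)
    (h : s * (Q^2*q) + s*(s-1)*Q^2 - (Q*(Q-1)+Q^2)*(s*(Q^2*q)) + (Q*(Q-1))*Q^2*(Q^2*q^2)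
      = (s - Q*(Q-1))*(s-Q^2)) : s = Q*(q*Q-1) := by
  have h1 : (Q-1) * ((s - Q*(q*Q-1)) * ((Q+1)*s - Q^2*(q*Q+1))) = 0 := by linear_combination h
  rcases mul_eq_zero.1 h1 with h2 | h2
  · omega
  rcases mul_eq_zero.1 h2 with h3 | h3
  · linarith
  exfalso
  have h4 : Q + 1 ∣ q - 1 := ⟨q*Q^2 - (q-1)*Q + (q-1) - s, by linear_combination h3⟩
  have := Int.le_of_dvd (by omega) h4
  omega

open Finset Module Classical in
theorem aux_main (n : ℕ) (hn : 1 ≤ n)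
    {F V : Type} [Field F] [Fintype F] [AddCommGroup V] [Module F V] [Fintype V]
    (hV : finrank F V = 2*n+2) (q : ℕ) (hq : Fintype.card F = q)
    (T : Finset (Submodule F V)) (hT : ∀ π ∈ T, finrank F π = 2*n+1)
    (x : V → ℕ) (hx : ∀ v, x v = (T.filter (fun σ => v ∈ σ)).card)
    (hP : ∀ v, v ≠ 0 → x v = q^n*(q^n-1) ∨ x v = q^(2*n))
    (π : Submodule F V) (hπ : finrank F π = 2*n+1) (hπT : π ∉ T) :
    (univ.filter (fun v : V => v ≠ 0 ∧ x v = q^n*(q^n-1) ∧ v ∈ π)).card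
      = q^(2*n) + q^(n+1) - q^n - 1 := by
  have hq2 : 2 ≤ q := hq ▸ Fintype.one_lt_card
  have hQq : q ≤ q^n := Nat.le_self_pow (by omega) q
  have hx' : ∀ v, (x v : ℤ) = ∑ σ ∈ T, if v ∈ σ then 1 else 0 := by
    intro v; rw [hx]; simp
  have e1 : q^(2*n+1) = (q^n)^2*q := by ring
  have e0 : q^(2*n) = (q^n)^2 := by ring
  have e2 : q^(2*n+2) = (q^n)^2*q^2 := by ring
  have hcV : Fintype.card V = (q^n)^2*q^2 := by
    rw [Module.card_eq_pow_finrank (K := F), hV, hq, e2]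
  have hA : ∀ A : Submodule F V, ∑ v : V, (if v ∈ A then (1:ℤ) else 0) =
      (q:ℤ) ^ finrank F A := by
    intro A
    have := aux_card A
    rw [hq] at this
    rw [Finset.sum_boole, this]; push_cast; rfl
  have hint : ∀ A ∈ T, ∀ B : Submodule F V, finrank F B = 2*n+1 → A ≠ B →
      finrank F (A ⊓ B : Submodule F V) = 2*n :=
    fun A hA B hB h => aux_inter (2*n) hV A B (hT A hA) hB h
  have hneg : ((q^n*(q^n-1) : ℕ) : ℤ) = (q:ℤ)^n*((q:ℤ)^n-1) := by
    rw [Nat.cast_mul, Nat.cast_sub (by omega)]; push_cast; rfl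
  set Q : ℤ := (q:ℤ)^n with hQ
  have hP' : ∀ v, v ≠ 0 → (x v : ℤ) = Q*(Q-1) ∨ (x v : ℤ) = Q^2 := by
    intro v hv
    rcases hP v hv with h | h
    · left; rw [h, hneg]
    · right; rw [h, e0]; push_cast; rfl
  have hx0 : (x 0 : ℤ) = T.card := by rw [hx]; simp
  have s1 : ∑ v : V, (x v : ℤ) = T.card * (Q^2*q) := by
    simp_rw [hx']
    rw [Finset.sum_comm]
    simp_rw [hA]
    rw [Finset.sum_congr rfl (fun σ hσ => by rw [hT σ hσ]), Finset.sum_const, nsmul_eq_mul, hQ]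
    ring
  have s2 : ∑ v : V, (x v : ℤ)^2 = T.card * (Q^2*q) + T.card*(T.card-1)*Q^2 := by
    have : ∀ v, (x v : ℤ)^2 = ∑ σ ∈ T, ∑ τ ∈ T, if v ∈ σ ⊓ τ then 1 else 0 := by
      intro v
      rw [sq, hx', Finset.sum_mul_sum]
      refine sum_congr rfl fun σ _ => sum_congr rfl fun τ _ => ?_
      simp only [Submodule.mem_inf]
      split_ifs <;> simp_all
    simp_rw [this]
    rw [Finset.sum_comm]
    have : ∀ σ ∈ T, ∑ v : V, ∑ τ ∈ T, (if v ∈ σ ⊓ τ then (1:ℤ) else 0)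
        = Q^2*q + (T.card-1)*Q^2 := by
      intro σ hσ
      rw [Finset.sum_comm]
      simp_rw [hA]
      rw [← Finset.add_sum_erase _ _ hσ, inf_idem, hT σ hσ]
      rw [Finset.sum_congr rfl (g := fun _ => Q^2) (fun τ hτ => by
        rw [hint σ hσ τ (hT τ (mem_of_mem_erase hτ)) (ne_of_mem_erase hτ).symm, hQ]; ring)]
      rw [Finset.sum_const, nsmul_eq_mul, Finset.card_erase_of_mem hσ,
        Nat.cast_sub (Finset.card_pos.2 ⟨σ, hσ⟩), hQ]
      push_cast; ring
    rw [Finset.sum_congr rfl this, Finset.sum_const, nsmul_eq_mul]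
    ring
  have s3 : ∑ v : V, ((x v : ℤ) - Q*(Q-1)) * ((x v : ℤ) - Q^2)
      = ((T.card : ℤ) - Q*(Q-1)) * ((T.card : ℤ) - Q^2) := by
    rw [← hx0]
    apply Finset.sum_eq_single
    · intro v _ hv
      rcases hP' v hv with h | h <;> rw [h] <;> ring
    · simp
  have s4 : ∑ v : V, ((x v : ℤ) - Q*(Q-1)) * ((x v : ℤ) - Q^2) =
      ∑ v : V, (x v : ℤ)^2 - (Q*(Q-1)+Q^2) * ∑ v : V, (x v : ℤ) + (Q*(Q-1))*Q^2*(Q^2*q^2) := by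
    rw [Finset.mul_sum, ← Finset.sum_sub_distrib]
    have : (Q*(Q-1))*Q^2*(Q^2*q^2) = ∑ v : V, (Q*(Q-1))*Q^2 := by
      rw [Finset.sum_const, nsmul_eq_mul, Finset.card_univ, hcV, hQ]; push_cast; ring
    rw [this, ← Finset.sum_add_distrib]
    exact Finset.sum_congr rfl fun v _ => by ring
  have hs : (T.card : ℤ) = Q*(q*Q-1) := by
    apply aux_arith q Q
    · exact_mod_cast hq2
    · rw [hQ]; exact_mod_cast hQq
    · rw [← s3, s4, s1, s2]
  -- the hyperplane π
  have t1 : ∑ v : V, (if v ∈ π then (x v : ℤ) else 0) = T.card * Q^2 := by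
    have : ∀ v, (if v ∈ π then (x v : ℤ) else 0) = ∑ σ ∈ T, if v ∈ σ ⊓ π then 1 else 0 := by
      intro v
      rw [hx']
      by_cases h : v ∈ π <;> simp [h]
    simp_rw [this]
    rw [Finset.sum_comm]
    simp_rw [hA]
    rw [Finset.sum_congr rfl (g := fun _ => Q^2) (fun σ hσ => by
        rw [hint σ hσ π hπ (fun h => hπT (h ▸ hσ)), hQ]; ring)]
    rw [Finset.sum_const, nsmul_eq_mul]
  have hQpos : 0 < Q := by rw [hQ]; positivity
  set K := (univ.filter (fun v : V => v ≠ 0 ∧ x v = q^n*(q^n-1) ∧ v ∈ π)).card with hK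
  have t2 : ∑ v : V, (if v ∈ π then (x v : ℤ) else 0) =
      Q^2 * (Q^2*q) - Q * K + (T.card - Q^2) := by
    have hKs : (K : ℤ) = ∑ v : V, if (v ≠ 0 ∧ x v = q^n*(q^n-1) ∧ v ∈ π) then 1 else 0 := by
      rw [Finset.sum_boole]
    have hp := hA π
    rw [hπ] at hp
    have hz : (T.card - Q^2 : ℤ) = ∑ v : V, if v = 0 then (T.card - Q^2 : ℤ) else 0 := by simp
    have hq' : Q^2*q = (q:ℤ)^(2*n+1) := by rw [hQ]; ring
    rw [hz, hKs, hq', ← hp, Finset.mul_sum, Finset.mul_sum, ← Finset.sum_sub_distrib,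
      ← Finset.sum_add_distrib]
    refine Finset.sum_congr rfl fun v _ => ?_
    by_cases h0 : v = 0
    · subst h0; simp [hx0]
    by_cases hv : v ∈ π
    · by_cases hb : x v = q^n*(q^n-1)
      · rw [if_pos hv, if_pos hv, if_pos ⟨h0, hb, hv⟩, if_neg h0, hb, hneg]; ring
      · have h1 : (x v : ℤ) = Q^2 := by
          rcases hP' v h0 with h | h
          · exact absurd (by rw [← hneg] at h; exact_mod_cast h) hb
          · exact h
        simp [hv, hb, h0, h1]
    · simp [hv, h0]
  have fin : (K : ℤ) = Q^2 + Q*q - Q - 1 := by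
    have : Q * (K : ℤ) = Q * (Q^2 + Q*q - Q - 1) := by
      rw [t1, hs] at t2
      linear_combination t2
    exact mul_left_cancel₀ hQpos.ne' this
  have : K + 1 + q^n = (q^n)^2 + q^n*q := by
    zify; rw [← hQ]; linarith
  rw [pow_succ, e0]
  omega



/-- For `n ≥ 1` and a nonempty family `S` of hyperplanes of `PG(2n+1,q)`
satisfying (P1⁺), every hyperplane of `PG(2n+1,q)` not in `S` contains exactly
`(q^{2n}+q^{n+1}-q^n-1)/(q-1)` black points. -/
theorem stmt_17 (n : ℕ) (hn : 1 ≤ n)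
    (F : Type) [Field F] [Fintype F] (q : ℕ) (hq : Fintype.card F = q)
    (S : Set (Submodule F (Fin (2*n+2) → F)))
    (hS : S.Nonempty)
    (hhyp : ∀ π ∈ S, Module.finrank F π = 2*n+1)
    (hP1 : ∀ p : Submodule F (Fin (2*n+2) → F), Module.finrank F p = 1 →
      {π ∈ S | p ≤ π}.ncard = q^n * (q^n - 1) ∨ {π ∈ S | p ≤ π}.ncard = q^(2*n)) :
    ∀ π : Submodule F (Fin (2*n+2) → F), Module.finrank F π = 2*n+1 → π ∉ S →
      {p : Submodule F (Fin (2*n+2) → F) | Module.finrank F p = 1 ∧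
        {σ ∈ S | p ≤ σ}.ncard = q^n * (q^n - 1) ∧ p ≤ π}.ncard
        = (q^(2*n) + q^(n+1) - q^n - 1)/(q - 1) := by
  classical
  intro π hπ hπS
  have hq2 : 2 ≤ q := hq ▸ Fintype.one_lt_card
  have hfin : S.Finite := Set.toFinite _
  have hc : ∀ v : Fin (2*n+2) → F, {σ ∈ S | Submodule.span F {v} ≤ σ}.ncard =
      (hfin.toFinset.filter (fun σ => v ∈ σ)).card := by
    intro v
    rw [← Set.ncard_coe_finset]
    congr 1
    ext σ
    simp
  have key := aux_main n hn (F := F) (V := Fin (2*n+2) → F) (by simp) q hq hfin.toFinset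
    (fun σ hσ => hhyp σ (by simpa using hσ))
    (fun v => {σ ∈ S | Submodule.span F {v} ≤ σ}.ncard) hc
    (fun v hv => hP1 _ (finrank_span_singleton hv)) π hπ (by simpa using hπS)
  have pts := aux_points (F := F) (V := Fin (2*n+2) → F)
    (fun p => {σ ∈ S | p ≤ σ}.ncard = q^n * (q^n - 1) ∧ p ≤ π)
  rw [← key]
  simp only [Submodule.span_singleton_le_iff_mem] at pts ⊢
  rw [pts, hq]
  exact (Nat.mul_div_cancel _ (by omega)).symm
end

section
/- Let q be a prime power and let Σ be a family of planes of PG(3,q) with |Σ| = q³ + q² such that every point of PG(3,q) lies in exactly q²+q or exactly q² planes of Σ, and every line of PG(3,q) that is contained in at least one plane of Σ is contained in at least q−1 planes of Σ. Call a point white if it lies in exactly q² planes of Σ and black if it lies in exactly q²+q planes of Σ. Then there exists a line l of PG(3,q) such that the white points are exactly the q+1 points contained in l (so the black points are exactly the points of PG(3,q) not contained in l), and Σ is exactly the set of planes of PG(3,q) not containing l, equivalently the planes meeting l in a unique point. -/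
/-- The number of planes of `F^4` containing a given subspace `W` of dimension `4 - n`. -/
lemma planes_through_ncard (F : Type) [Field F] [Fintype F] (W : Submodule F (Fin 4 → F)) (n : ℕ)
    (hW : Module.finrank F W + n = 4) :
    {π : Submodule F (Fin 4 → F) | Module.finrank F π = 3 ∧ W ≤ π}.ncard
      = ∑ i ∈ Finset.range n, Fintype.card F ^ i := by
  have hd : Module.finrank F W.dualAnnihilator = n := by
    have h := Subspace.finrank_add_finrank_dualAnnihilator_eq W
    rw [Module.finrank_fin_fun] at h
    omega
  let g : Projectivization F W.dualAnnihilator → Submodule F (Fin 4 → F) :=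
    fun P => (P.submodule.map W.dualAnnihilator.subtype).dualCoannihilator
  have hg : Function.Injective g := by
    intro P Q h
    apply Projectivization.submodule_injective
    apply Submodule.map_injective_of_injective W.dualAnnihilator.injective_subtype
    have h2 := congrArg Submodule.dualAnnihilator h
    simp only [g] at h2
    rwa [Subspace.dualCoannihilator_dualAnnihilator_eq,
      Subspace.dualCoannihilator_dualAnnihilator_eq] at h2
  have hr : {π : Submodule F (Fin 4 → F) | Module.finrank F π = 3 ∧ W ≤ π} = Set.range g := by
    ext π
    constructor
    · rintro ⟨h3, hWπ⟩
      have hle : π.dualAnnihilator ≤ W.dualAnnihilator := Submodule.dualAnnihilator_anti hWπ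
      have h1 : Module.finrank F π.dualAnnihilator = 1 := by
        have h := Subspace.finrank_add_finrank_dualAnnihilator_eq π
        rw [Module.finrank_fin_fun] at h
        omega
      have hm : (π.dualAnnihilator.comap W.dualAnnihilator.subtype).map
          W.dualAnnihilator.subtype = π.dualAnnihilator := by
        rw [Submodule.map_comap_subtype, inf_eq_right.2 hle]
      have h1' : Module.finrank F (π.dualAnnihilator.comap W.dualAnnihilator.subtype) = 1 := by
        rw [← h1]
        conv_rhs => rw [← hm]
        exact (Submodule.finrank_map_subtype_eq _ _).symm
      refine ⟨Projectivization.mk'' _ h1', ?_⟩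
      simp only [g, Projectivization.submodule_mk'', hm]
      exact Subspace.dualAnnihilator_dualCoannihilator_eq
    · rintro ⟨P, rfl⟩
      constructor
      · have h := Subspace.finrank_add_finrank_dualCoannihilator_eq
          (P.submodule.map W.dualAnnihilator.subtype)
        rw [Module.finrank_fin_fun, Submodule.finrank_map_subtype_eq, P.finrank_submodule] at h
        simp only [g]
        omega
      · calc W = W.dualAnnihilator.dualCoannihilator :=
              Subspace.dualAnnihilator_dualCoannihilator_eq.symm
          _ ≤ _ := Submodule.dualCoannihilator_anti (Submodule.map_subtype_le _ _)
  rw [hr, ← Nat.card_coe_set_eq, Nat.card_range_of_injective hg,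
    Projectivization.card_of_finrank F _ hd, Nat.card_eq_fintype_card]

/-- For a prime power `q` and a family `S` of planes of `PG(3,q)` with
`|S| = q³+q²`, in which every point lies in exactly `q²+q` or `q²` planes of `S` and every
line contained in some plane of `S` is contained in at least `q-1` planes of `S`, there is a
line `l` such that the white points are exactly the points contained in `l`, the black points
are exactly the points not contained in `l`, and `S` is exactly the set of planes not
containing `l` (equivalently, meeting `l` in a unique point). -/
theorem stmt_19 (F : Type) [Field F] [Fintype F] (q : ℕ) (hq : Fintype.card F = q)
    (S : Set (Submodule F (Fin 4 → F)))
    (hcard : S.ncard = q^3 + q^2)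
    (hplane : ∀ π ∈ S, Module.finrank F π = 3)
    (hP1 : ∀ p : Submodule F (Fin 4 → F), Module.finrank F p = 1 →
      {π ∈ S | p ≤ π}.ncard = q^2 + q ∨ {π ∈ S | p ≤ π}.ncard = q^2)
    (hP2 : ∀ L : Submodule F (Fin 4 → F), Module.finrank F L = 2 →
      (∃ π ∈ S, L ≤ π) → q - 1 ≤ {π ∈ S | L ≤ π}.ncard) :
    ∃ l : Submodule F (Fin 4 → F), Module.finrank F l = 2 ∧
      {p : Submodule F (Fin 4 → F) | Module.finrank F p = 1 ∧
        {π ∈ S | p ≤ π}.ncard = q^2} =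
        {p : Submodule F (Fin 4 → F) | Module.finrank F p = 1 ∧ p ≤ l} ∧
      {p : Submodule F (Fin 4 → F) | Module.finrank F p = 1 ∧
        {π ∈ S | p ≤ π}.ncard = q^2 + q} =
        {p : Submodule F (Fin 4 → F) | Module.finrank F p = 1 ∧ ¬ p ≤ l} ∧
      S = {π : Submodule F (Fin 4 → F) | Module.finrank F π = 3 ∧ ¬ l ≤ π} := by
  have hq2 : 2 ≤ q := hq ▸ Fintype.one_lt_card
  set A : Set (Submodule F (Fin 4 → F)) := {π | Module.finrank F π = 3} with hA
  have hAc : A.ncard = q^3 + q^2 + q + 1 := by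
    have h := planes_through_ncard F ⊥ 4 (by simp)
    simp only [bot_le, and_true, hq, Finset.sum_range_succ, Finset.sum_range_zero] at h
    rw [hA, h]; ring
  have hSA : S ⊆ A := hplane
  set T := A \ S with hT
  have hTc : T.ncard = q + 1 := by
    rw [hT, Set.ncard_sdiff hSA (Set.toFinite _), hAc, hcard]; omega
  have hpt : ∀ p : Submodule F (Fin 4 → F), Module.finrank F p = 1 →
      {π ∈ T | p ≤ π}.ncard + {π ∈ S | p ≤ π}.ncard = q^2 + q + 1 := by
    intro p hp
    have h := planes_through_ncard F p 3 (by omega)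
    simp only [hq, Finset.sum_range_succ, Finset.sum_range_zero] at h
    rw [← Set.ncard_union_eq _ (Set.toFinite _) (Set.toFinite _)]
    · convert h using 1
      · congr 1
        ext π
        have := @hSA π
        simp only [hT, hA, Set.mem_union, Set.mem_setOf_eq, Set.mem_sdiff] at this ⊢
        tauto
      · ring
    · rw [Set.disjoint_left]
      rintro π ⟨h1, _⟩ ⟨h2, _⟩
      exact h1.2 h2
  -- a point in two planes of `T` lies in all of them
  have hall : ∀ p : Submodule F (Fin 4 → F), Module.finrank F p = 1 →
      {π ∈ T | p ≤ π}.ncard ≠ 1 → ∀ π ∈ T, p ≤ π := by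
    intro p hp h1
    have h := hpt p hp
    have hc : {π ∈ T | p ≤ π}.ncard = q + 1 := by
      rcases hP1 p hp with h' | h' <;> omega
    have he : {π ∈ T | p ≤ π} = T :=
      Set.eq_of_subset_of_ncard_le (Set.sep_subset _ _) (by omega) (Set.toFinite _)
    intro π hπ
    rw [← he] at hπ
    exact hπ.2
  obtain ⟨a, ha, b, hb, hab⟩ := (Set.one_lt_ncard (Set.toFinite T)).1 (by omega)
  have ha3 : Module.finrank F a = 3 := ha.1
  have hb3 : Module.finrank F b = 3 := hb.1
  have hl : Module.finrank F (a ⊓ b : Submodule F (Fin 4 → F)) = 2 := by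
    have h := Submodule.finrank_sup_add_finrank_inf_eq a b
    have h4 : Module.finrank F (a ⊔ b : Submodule F (Fin 4 → F)) ≤ 4 := by
      simpa using Submodule.finrank_le (a ⊔ b)
    have hlt : a < a ⊔ b := by
      refine lt_of_le_of_ne le_sup_left fun he => hab ?_
      have hba : b ≤ a := by rw [he]; exact le_sup_right
      exact (Submodule.eq_of_le_of_finrank_eq hba (by omega)).symm
    have := Submodule.finrank_lt_finrank_of_lt hlt
    omega
  have hlT : ∀ π ∈ T, a ⊓ b ≤ π := by
    intro π hπ x hx
    by_cases hx0 : x = 0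
    · simp [hx0]
    have hxa : Submodule.span F {x} ≤ a := by
      simpa [Submodule.span_singleton_le_iff_mem] using hx.1
    have hxb : Submodule.span F {x} ≤ b := by
      simpa [Submodule.span_singleton_le_iff_mem] using hx.2
    have := hall (Submodule.span F {x}) (finrank_span_singleton hx0) (by
      have : 1 < {π ∈ T | Submodule.span F {x} ≤ π}.ncard :=
        (Set.one_lt_ncard (Set.toFinite _)).2 ⟨a, ⟨ha, hxa⟩, b, ⟨hb, hxb⟩, hab⟩
      omega) π hπ
    exact this (Submodule.mem_span_singleton_self x)
  have hTeq : T = {π : Submodule F (Fin 4 → F) | Module.finrank F π = 3 ∧ a ⊓ b ≤ π} := by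
    refine Set.eq_of_subset_of_ncard_le (fun π hπ => ⟨hπ.1, hlT π hπ⟩) ?_ (Set.toFinite _)
    rw [planes_through_ncard F _ 2 (by omega), hTc, hq]
    simp [Finset.sum_range_succ, add_comm]
  have hon : ∀ p : Submodule F (Fin 4 → F), Module.finrank F p = 1 → p ≤ a ⊓ b →
      {π ∈ S | p ≤ π}.ncard = q^2 := by
    intro p hp hpl
    have h := hpt p hp
    have he : {π ∈ T | p ≤ π} = T :=
      Set.sep_eq_self_iff_mem_true.2 fun π hπ => hpl.trans (hlT π hπ)
    rw [he, hTc] at h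
    omega
  have hoff : ∀ p : Submodule F (Fin 4 → F), Module.finrank F p = 1 → ¬ p ≤ a ⊓ b →
      {π ∈ S | p ≤ π}.ncard = q^2 + q := by
    intro p hp hpl
    have h := hpt p hp
    have h1 : {π ∈ T | p ≤ π}.ncard = 1 := by
      by_contra h1
      exact hpl (le_inf (hall p hp h1 a ha) (hall p hp h1 b hb))
    omega
  refine ⟨a ⊓ b, hl, ?_, ?_, ?_⟩
  · ext p
    constructor
    · rintro ⟨hp, hc⟩
      refine ⟨hp, ?_⟩
      by_contra hpl
      have := hoff p hp hpl
      omega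
    · rintro ⟨hp, hpl⟩
      exact ⟨hp, hon p hp hpl⟩
  · ext p
    constructor
    · rintro ⟨hp, hc⟩
      refine ⟨hp, fun hpl => ?_⟩
      have := hon p hp hpl
      omega
    · rintro ⟨hp, hpl⟩
      exact ⟨hp, hoff p hp hpl⟩
  · ext π
    constructor
    · intro hπ
      refine ⟨hplane π hπ, fun hle => ?_⟩
      have : π ∈ T := by rw [hTeq]; exact ⟨hplane π hπ, hle⟩
      exact this.2 hπ
    · rintro ⟨h3, hnl⟩
      by_contra hπ
      exact hnl (hlT π ⟨h3, hπ⟩)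
end
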